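/- Let B be a Banach space over K ∈ {ℝ, ℂ} and Φ = {φ_λ : λ ∈ Λ} ⊆ B' a family of bounded linear functionals. If the phaseless measurement map A_Φ : f ↦ (|⟨f, φ_λ⟩|)_{λ∈Λ}, considered on equivalence classes modulo multiplication by unimodular scalars, is injective, then Φ satisfies the complement property: for every S ⊆ Λ, either the annihilator of span Φ_S in B is {0}, or the annihilator of span Φ_{Λ∖S} in B is {0}. -/

import Mathlib

/-! If `u ≠ 0` is annihilated by `Φ_S` and `v ≠ 0` by `Φ_{Λ∖S}`, then `u + v` and `u - v` have
the same phaseless measurements, so `u - v = c • (u + v)`, that is, `(1 - c) • u = (1 + c) • v`.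
If `c = -1` then `u = 0`. Otherwise `v` is a multiple of `u`, so every functional in `Φ`
annihilates `v`; thus `v` has the measurements of `0`, and injectivity gives `v = 0`. -/

/-- If the phaseless measurement map of a family of bounded linear functionals on a
Banach space over `𝕜 ∈ {ℝ, ℂ}` is injective modulo unimodular scalars, then the family
satisfies the complement property. -/
theorem complement_property_necessary
    {𝕜 : Type*} [RCLike 𝕜] {B : Type*} [NormedAddCommGroup B] [NormedSpace 𝕜 B]
    [CompleteSpace B] {Λ : Type*} (Φ : Λ → (B →L[𝕜] 𝕜))
    (hinj : ∀ f g : B, (∀ l : Λ, ‖Φ l f‖ = ‖Φ l g‖) →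
      ∃ c : 𝕜, ‖c‖ = 1 ∧ g = c • f) :
    ∀ S : Set Λ,
      (∀ f : B, (∀ l ∈ S, Φ l f = 0) → f = 0) ∨
      (∀ f : B, (∀ l ∉ S, Φ l f = 0) → f = 0) := by
  intro S
  by_contra! h
  obtain ⟨⟨u, hu, hu0⟩, v, hv, hv0⟩ := h
  obtain ⟨c, -, hc⟩ := hinj (u + v) (u - v) fun l => by
    by_cases hl : l ∈ S
    · simp [hu l hl]
    · simp [hv l hl]
  have key : (1 - c) • u = (1 + c) • v := by
    linear_combination (norm := module) hc
  by_cases h1 : 1 + c = 0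
  · have h2 : 1 - c = 2 := by linear_combination -h1
    rw [h1, h2, zero_smul] at key
    exact hu0 ((smul_eq_zero.mp key).resolve_left two_ne_zero)
  · have hall : ∀ l, Φ l v = 0 := fun l => by
      by_cases hl : l ∈ S
      · have := congrArg (Φ l) key
        simpa [hu l hl, h1] using this
      · exact hv l hl
    obtain ⟨d, -, hd⟩ := hinj 0 v fun l => by simp [hall l]
    exact hv0 (by simpa using hd)
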